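/- arXiv:0705.0821 — 2 statements merged into one kernel-verified Lean document; each statement's English description precedes it below -/
import Mathlib

section
/- Let n ≥ 3 and let Θ be the alternating F-bilinear map on S(n) which vanishes on pairs of homogeneous elements unless both have degree −1 and satisfies Θ(D_i, D_j) = D_{ij}(x^τ) for all i < j. Then for all i ≠ j one has H_Θ(D_i)(x_i^{p−1}·D_j) = −D_{ij}(x^τ), where D_i^{[p]} = 0 is used in the definition of H; consequently, for every i the map H_Θ(D_i) : S(n) → S(n) is not an inner derivation of S(n). -/
/-!
The evaluation of `H_Θ(D_i)` on `x_i^{p-1} D_j` is direct: applying `ad D_i` repeatedly lowers the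
power of `x_i`, so only the `0`-th summand feeds `Θ` two arguments of degree `-1`. It contributes
`(p-1)! Θ(D_i, D_j) = -D_{ij}(x^τ)` by Wilson's theorem. The other summands vanish because all
`x_i^m D_j` with `i ≠ j` are homogeneous elements of `S(n)` (`xD_mem_Ssub`, which uses `n ≥ 3`).

For non-innerness, suppose `H_Θ(D_i) = ad z` with `z ∈ S(n)`. Evaluating
`[z, x_i^{p-1} D_j] = -D_{ij}(x^τ)` at `x_i` gives `D_j(x_i^{p-1} z(x_i)) = D_j(x^τ)`. The
coefficient of `x^τ` is a functional `λ` on `A(n)` killing all partial derivatives (`coeffT_Dj`),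
so integrating by parts against `x_j` gives `λ(x_i^{p-1} z(x_i)) = λ(x^τ) = 1`: the element `z` has
a nonzero coefficient at `x^{τ-(p-1)ε_i} D_i`. But this coefficient vanishes on `S(n)`
(`coeffT_Ssub`): for divergence-free `D = ∑ f_k D_k` and `E = ∑ g_k D_k`,
`[D, E](x_i) = ∑_k D_k(f_k g_i - g_k f_i)`, where the `k = i` term is zero, while for `k ≠ i`
the factor `x_i^{p-1}` can be moved inside `D_k`.
-/


set_option maxHeartbeats 1000000
set_option synthInstance.maxHeartbeats 400000

open scoped BigOperators
noncomputable section

variable (F : Type*) [Field F] (p n : ℕ)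

/-- The ideal `(X_1^p, …, X_n^p)` of the polynomial ring. -/
def truncIdeal : Ideal (MvPolynomial (Fin n) F) :=
  Ideal.span (Set.range fun i : Fin n => MvPolynomial.X i ^ p)

/-- The truncated polynomial algebra `A(n) = F[x_1,…,x_n]/(x_1^p,…,x_n^p)`. -/
abbrev TruncP := MvPolynomial (Fin n) F ⧸ truncIdeal F p n

/-- The monomial `x^a` in `A(n)`. -/
def xpow (a : Fin n → ℕ) : TruncP F p n :=
  Ideal.Quotient.mk _ (MvPolynomial.monomial (Finsupp.equivFunOnFinite.symm a) 1)

/-- Lift an `F`-linear map killing the truncation ideal to the quotient. -/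
def liftF {N : Type*} [AddCommGroup N] [Module F N]
    (f : MvPolynomial (Fin n) F →ₗ[F] N)
    (h : (truncIdeal F p n).restrictScalars F ≤ LinearMap.ker f) :
    TruncP F p n →ₗ[F] N :=
  (Submodule.liftQ ((truncIdeal F p n).restrictScalars F) f h) ∘ₗ
    (Submodule.Quotient.restrictScalarsEquiv F (truncIdeal F p n)).symm.toLinearMap

lemma liftF_mk {N : Type*} [AddCommGroup N] [Module F N]
    (f : MvPolynomial (Fin n) F →ₗ[F] N)
    (h : (truncIdeal F p n).restrictScalars F ≤ LinearMap.ker f)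
    (x : MvPolynomial (Fin n) F) :
    liftF F p n f h (Ideal.Quotient.mk _ x) = f x := by
  simp only [liftF, LinearMap.coe_comp, Function.comp_apply, LinearEquiv.coe_coe]
  have : (Ideal.Quotient.mk (truncIdeal F p n)) x = Submodule.Quotient.mk x := rfl
  rw [this, Submodule.Quotient.restrictScalarsEquiv_symm_mk, Submodule.liftQ_apply]

lemma truncIdeal_pderiv_mem [CharP F p] (j : Fin n) {f : MvPolynomial (Fin n) F}
    (hf : f ∈ truncIdeal F p n) :
    Ideal.Quotient.mk (truncIdeal F p n) (MvPolynomial.pderiv j f) = 0 := by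
  classical
  let K : Ideal (MvPolynomial (Fin n) F) :=
    { carrier := {g | Ideal.Quotient.mk (truncIdeal F p n) (MvPolynomial.pderiv j g) = 0 ∧
        Ideal.Quotient.mk (truncIdeal F p n) g = 0},
      add_mem' := by
        rintro a b ⟨ha1, ha2⟩ ⟨hb1, hb2⟩
        refine ⟨?_, ?_⟩
        · rw [map_add, map_add, ha1, hb1, add_zero]
        · rw [map_add, ha2, hb2, add_zero]
      zero_mem' := ⟨by rw [map_zero, map_zero], by rw [map_zero]⟩
      smul_mem' := by
        rintro c x ⟨hx1, hx2⟩
        refine ⟨?_, ?_⟩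
        · have hL : MvPolynomial.pderiv j (c * x)
              = c * MvPolynomial.pderiv j x + x * MvPolynomial.pderiv j c := by
            have := (MvPolynomial.pderiv j).leibniz c x
            simpa [smul_eq_mul, mul_comm] using this
          rw [smul_eq_mul, hL]
          rw [map_add, map_mul, map_mul, hx1, hx2, mul_zero, zero_mul, add_zero]
        · rw [smul_eq_mul, map_mul, hx2, mul_zero] }
  have hle : truncIdeal F p n ≤ K := by
    rw [truncIdeal, Ideal.span_le]
    rintro _ ⟨i, rfl⟩
    refine ⟨?_, ?_⟩
    · have hgen : MvPolynomial.pderiv j (MvPolynomial.X (R := F) i ^ p) = 0 := by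
        rw [MvPolynomial.X_pow_eq_monomial, MvPolynomial.pderiv_monomial]
        rcases eq_or_ne i j with h | h
        · subst h
          simp [Finsupp.single_apply, CharP.cast_eq_zero F p]
        · simp [Finsupp.single_apply, h]
      rw [hgen, map_zero]
    · exact Ideal.Quotient.eq_zero_iff_mem.mpr (Ideal.subset_span ⟨i, rfl⟩)
  exact (hle hf).1

lemma truncIdeal_support {f : MvPolynomial (Fin n) F} (hf : f ∈ truncIdeal F p n) :
    ∀ d ∈ f.support, ∃ i, p ≤ d i := by
  classical
  let K : Ideal (MvPolynomial (Fin n) F) :=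
    { carrier := {g | ∀ d ∈ g.support, ∃ i, p ≤ d i},
      add_mem' := by
        intro a b ha hb d hd
        rcases Finset.mem_union.mp (MvPolynomial.support_add hd) with h | h
        · exact ha d h
        · exact hb d h
      zero_mem' := by simp
      smul_mem' := by
        intro c x hx d hd
        rw [smul_eq_mul] at hd
        obtain ⟨d1, hd1, d2, hd2, rfl⟩ := Finset.mem_add.mp (MvPolynomial.support_mul c x hd)
        obtain ⟨i, hi⟩ := hx d2 hd2
        exact ⟨i, le_trans hi (by simp)⟩ }
  have hle : truncIdeal F p n ≤ K := by
    rw [truncIdeal, Ideal.span_le]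
    rintro _ ⟨i, rfl⟩ d hd
    simp only [MvPolynomial.X_pow_eq_monomial] at hd
    rw [MvPolynomial.support_monomial] at hd
    simp only [one_ne_zero, if_false] at hd
    rcases Finset.mem_singleton.mp hd with rfl
    exact ⟨i, by simp⟩
  exact hle hf

/-- The coefficient of `x^a` (for `a` componentwise `< p`) of an element of `A(n)`,
as a linear functional. For `a` not in the box this is defined to be `0`. -/
def coeffT (a : Fin n → ℕ) : TruncP F p n →ₗ[F] F :=
  if h : ∀ i, a i < p then
    liftF F p n
      { toFun := fun f => f.coeff (Finsupp.equivFunOnFinite.symm a),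
        map_add' := fun f g => MvPolynomial.coeff_add _ f g,
        map_smul' := fun c f => MvPolynomial.coeff_smul _ c f }
      (by
        intro f hf
        have hf' : f ∈ truncIdeal F p n := hf
        simp only [LinearMap.mem_ker, LinearMap.coe_mk, AddHom.coe_mk]
        by_contra hne
        have hmem : Finsupp.equivFunOnFinite.symm a ∈ f.support :=
          MvPolynomial.mem_support_iff.mpr hne
        obtain ⟨i, hi⟩ := truncIdeal_support F p n hf' _ hmem
        have heq : (Finsupp.equivFunOnFinite.symm a) i = a i := rfl
        have h2 := h i
        rw [heq] at hi
        omega)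
  else 0

/-- The Jacobson–Witt algebra `W(n) = Der_F A(n)`. -/
abbrev Witt := Derivation F (TruncP F p n) (TruncP F p n)

def DjL [CharP F p] (j : Fin n) : TruncP F p n →ₗ[F] TruncP F p n :=
  liftF F p n
    ((Ideal.Quotient.mkₐ F (truncIdeal F p n)).toLinearMap ∘ₗ (MvPolynomial.pderiv j).toLinearMap)
    (by
      intro f hf
      have hf' : f ∈ truncIdeal F p n := hf
      simp only [LinearMap.mem_ker, LinearMap.coe_comp, Function.comp_apply,
        AlgHom.toLinearMap_apply, Ideal.Quotient.mkₐ_eq_mk, Derivation.coeFn_coe]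
      exact truncIdeal_pderiv_mem F p n j hf')

lemma DjL_mk [CharP F p] (j : Fin n) (f : MvPolynomial (Fin n) F) :
    DjL F p n j (Ideal.Quotient.mk _ f) = Ideal.Quotient.mk _ (MvPolynomial.pderiv j f) := by
  rw [DjL, liftF_mk]
  simp

/-- The partial derivative `D_j = ∂/∂x_j`, as a derivation of `A(n)`. -/
def Dj [CharP F p] (j : Fin n) : Witt F p n where
  toLinearMap := DjL F p n j
  map_one_eq_zero' := by
    have h1 : (1 : TruncP F p n) = Ideal.Quotient.mk _ (1 : MvPolynomial (Fin n) F) :=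
      (map_one _).symm
    rw [LinearMap.coe_mk] at *
    show DjL F p n j 1 = 0
    rw [h1, DjL_mk]
    simp
  leibniz' := by
    intro a b
    obtain ⟨x, rfl⟩ := Ideal.Quotient.mk_surjective a
    obtain ⟨y, rfl⟩ := Ideal.Quotient.mk_surjective b
    show DjL F p n j _ = _ • DjL F p n j _ + _ • DjL F p n j _
    rw [← map_mul, DjL_mk, DjL_mk, DjL_mk, smul_eq_mul, smul_eq_mul, ← map_mul, ← map_mul,
      ← map_add]
    congr 1
    have := (MvPolynomial.pderiv j).leibniz x y
    simpa [smul_eq_mul] using this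
section Cochains

variable (F : Type*) [Field F] {L : Type*} [AddCommGroup L] [Module F L]

/-- A map of two arguments which is `F`-linear in each argument. -/
def IsBilinear (ψ : L → L → L) : Prop :=
  (∀ x, IsLinearMap F (ψ x)) ∧ ∀ y, IsLinearMap F fun x => ψ x y

/-- A 2-cochain with adjoint coefficients: an alternating `F`-bilinear map. -/
def IsCochain (ψ : L → L → L) : Prop :=
  IsBilinear F ψ ∧ ∀ x, ψ x x = 0

/-- A 2-cocycle with adjoint coefficients, for the bracket `B`. -/
def IsCocycle (B : L → L → L) (ψ : L → L → L) : Prop :=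
  IsCochain F ψ ∧ ∀ x y z,
    B x (ψ y z) - B y (ψ x z) + B z (ψ x y)
      - ψ (B x y) z + ψ (B x z) y - ψ (B y z) x = 0

/-- A 2-coboundary with adjoint coefficients, for the bracket `B`. -/
def IsCoboundary (B : L → L → L) (ψ : L → L → L) : Prop :=
  ∃ φ : L →ₗ[F] L, ∀ x y, ψ x y = B x (φ y) - B y (φ x) - φ (B x y)

/-- A 2-cocycle of a subspace `V` (closed under the bracket `B` of the ambient space),
with adjoint coefficients.  The cochain is recorded as an everywhere-defined bilinear
map preserving `V`; only its restriction to `V` is relevant. -/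
def IsCocycleOn (V : Submodule F L) (B : L → L → L) (ψ : L → L → L) : Prop :=
  IsBilinear F ψ ∧ (∀ x ∈ V, ∀ y ∈ V, ψ x y ∈ V) ∧ (∀ x ∈ V, ψ x x = 0) ∧
    ∀ x ∈ V, ∀ y ∈ V, ∀ z ∈ V,
      B x (ψ y z) - B y (ψ x z) + B z (ψ x y)
        - ψ (B x y) z + ψ (B x z) y - ψ (B y z) x = 0

/-- A 2-coboundary of a subspace `V`, with adjoint coefficients. -/
def IsCoboundaryOn (V : Submodule F L) (B : L → L → L) (ψ : L → L → L) : Prop :=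
  ∃ φ : L →ₗ[F] L, (∀ x ∈ V, φ x ∈ V) ∧
    ∀ x ∈ V, ∀ y ∈ V, ψ x y = B x (φ y) - B y (φ x) - φ (B x y)

/-- A derivation of a subspace `V` closed under the bracket `B`:
an `F`-linear map preserving `V` and satisfying the Leibniz rule on `V`. -/
def IsDerivationOn (V : Submodule F L) (B : L → L → L) (γ : L →ₗ[F] L) : Prop :=
  (∀ x ∈ V, γ x ∈ V) ∧ ∀ x ∈ V, ∀ y ∈ V, γ (B x y) = B (γ x) y + B x (γ y)

/-- An inner derivation of a subspace `V`: a map agreeing on `V` with `ad z = B z ·`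
for some `z ∈ V`. -/
def IsInnerOn (V : Submodule F L) (B : L → L → L) (δ : L → L) : Prop :=
  ∃ z ∈ V, ∀ y ∈ V, δ y = B z y

/-- An inner derivation: `δ = ad z = B z ·` for some `z`. -/
def IsInner (B : L → L → L) (δ : L → L) : Prop := ∃ z, ∀ y, δ y = B z y

/-- The squaring `Sq(γ)(x,y) = ∑_{i=1}^{p-1} [γ^i(x), γ^{p-i}(y)]/(i!·(p-i)!)`
of an operator `γ`, relative to the bracket `B`. -/
def Squaring (p : ℕ) (B : L → L → L) (γ : L → L) : L → L → L := fun x y =>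
  ∑ i ∈ Finset.Ioo 0 p,
    (((Nat.factorial i * Nat.factorial (p - i) : ℕ) : F))⁻¹ • B (γ^[i] x) (γ^[p - i] y)

/-- `Sq(z) := Sq(ad z)` for an element `z`. -/
def SqE (p : ℕ) (B : L → L → L) (z : L) : L → L → L :=
  Squaring F p B (fun y => B z y)

/-- The Hochschild operator
`H_ψ(x)(y) = ∑_{j=0}^{p-1} (ad x)^j (ψ(x, (ad x)^{p-1-j}(y))) − ψ(x^{[p]}, y)`,
for the bracket `B`, the 2-cochain `ψ`, and the chosen `p`-th power `xp` of `x`. -/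
def HOp (p : ℕ) (B : L → L → L) (ψ : L → L → L) (x xp : L) : L → L := fun y =>
  (∑ j ∈ Finset.range p, (fun z => B x z)^[j] (ψ x ((fun z => B x z)^[p - 1 - j] y)))
    - ψ xp y

end Cochains

section Special

variable (F : Type*) [Field F] (p n : ℕ) [CharP F p]

/-- The element `x^a D_j` of `W(n)`. -/
def xD (a : Fin n → ℕ) (j : Fin n) : Witt F p n := xpow F p n a • Dj F p n j

/-- `D_{ij}(f) = D_j(f)·D_i − D_i(f)·D_j ∈ W(n)`. -/
def Dij (i j : Fin n) (f : TruncP F p n) : Witt F p n :=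
  Dj F p n j f • Dj F p n i - Dj F p n i f • Dj F p n j

/-- The divergence `div(∑ f_i D_i) = ∑ D_i(f_i)`, i.e. `div(E) = ∑ D_i(E(x_i))`. -/
def divW (E : Witt F p n) : TruncP F p n :=
  ∑ i, Dj F p n i (E (xpow F p n (Pi.single i 1)))

/-- The special algebra `S(n) = [S'(n), S'(n)]`, the derived subalgebra of
`S'(n) = ker(div)`, as a subspace of `W(n)`. -/
def Ssub : Submodule F (Witt F p n) :=
  Submodule.span F
    {z | ∃ D E : Witt F p n, divW F p n D = 0 ∧ divW F p n E = 0 ∧ z = ⁅D, E⁆}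

/-- The multi-index `τ = (p−1, …, p−1)`. -/
def tauE : Fin n → ℕ := fun _ => p - 1

/-- The coefficient of the basis element `x^a D_i` of `W(n)` in `E ∈ W(n)`;
it equals the coefficient of `x^a` in `E(x_i)`. -/
def coeffW (a : Fin n → ℕ) (i : Fin n) (E : Witt F p n) : F :=
  coeffT F p n a (E (xpow F p n (Pi.single i 1)))

/-- The degree-`d` homogeneous component of `W(n)`, spanned by the `x^a D_j`
with `|a| − 1 = d`. -/
def Wgr (d : ℤ) : Submodule F (Witt F p n) :=
  Submodule.span F
    {E | ∃ (a : Fin n → ℕ) (j : Fin n),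
      (∀ i, a i < p) ∧ (∑ i, (a i : ℤ)) - 1 = d ∧ E = xD F p n a j}

end Special

/-! ### Calculus in the truncated polynomial algebra -/

section Helpers

/-- The class of the variable `x_i` in `A(n)`. -/
def xg (i : Fin n) : TruncP F p n := Ideal.Quotient.mk _ (MvPolynomial.X i)

lemma xpow_single (i : Fin n) (m : ℕ) : xpow F p n (Pi.single i m) = xg F p n i ^ m := by
  classical
  rw [xpow, xg, ← map_pow, MvPolynomial.X_pow_eq_monomial]
  congr 2
  ext k
  simp [Finsupp.single_apply, Pi.single_apply, eq_comm]

variable [CharP F p]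

lemma Dj_mk (j : Fin n) (f : MvPolynomial (Fin n) F) :
    Dj F p n j (Ideal.Quotient.mk _ f) = Ideal.Quotient.mk _ (MvPolynomial.pderiv j f) :=
  DjL_mk F p n j f

lemma Dj_xg_self (j : Fin n) : Dj F p n j (xg F p n j) = 1 := by
  rw [xg, Dj_mk]; simp

lemma Dj_xg_ne {i j : Fin n} (h : i ≠ j) : Dj F p n j (xg F p n i) = 0 := by
  rw [xg, Dj_mk, MvPolynomial.pderiv_X_of_ne h, map_zero]

lemma Dj_xg_pow_ne {i j : Fin n} (h : i ≠ j) (m : ℕ) : Dj F p n j (xg F p n i ^ m) = 0 := by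
  rw [Derivation.leibniz_pow, Dj_xg_ne F p n h, smul_zero, smul_zero]

lemma Dj_xg_pow_self (j : Fin n) (m : ℕ) :
    Dj F p n j (xg F p n j ^ (m + 1)) = ((m + 1 : ℕ) : F) • xg F p n j ^ m := by
  rw [Derivation.leibniz_pow, Dj_xg_self, smul_eq_mul, mul_one, Nat.add_sub_cancel,
    Nat.cast_smul_eq_nsmul]

/-- Every derivation of `A(n)` is determined by its values on the variables. -/
lemma witt_apply (D : Witt F p n) (f : TruncP F p n) :
    D f = ∑ k, D (xg F p n k) * Dj F p n k f := by
  classical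
  obtain ⟨g, rfl⟩ := Ideal.Quotient.mk_surjective f
  induction g using MvPolynomial.induction_on with
  | C a =>
    have h : ∀ E : Witt F p n, E (Ideal.Quotient.mk _ (MvPolynomial.C a)) = 0 :=
      fun E => E.map_algebraMap a
    simp [h]
  | add a b ha hb =>
    simp only [map_add, ha, hb, mul_add, Finset.sum_add_distrib]
  | mul_X a i ha =>
    have hx : Ideal.Quotient.mk (truncIdeal F p n) (MvPolynomial.X i) = xg F p n i := rfl
    simp only [map_mul, hx, Derivation.leibniz, smul_eq_mul, mul_add, Finset.sum_add_distrib]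
    congr 1
    · rw [Finset.sum_eq_single i]
      · rw [Dj_xg_self]; ring
      · intro k _ hk
        rw [Dj_xg_ne F p n hk.symm]; ring
      · simp
    · rw [ha, Finset.mul_sum]
      exact Finset.sum_congr rfl fun k _ => by ring

lemma Dj_comm (i j : Fin n) (f : TruncP F p n) :
    Dj F p n i (Dj F p n j f) = Dj F p n j (Dj F p n i f) := by
  have h : ⁅Dj F p n i, Dj F p n j⁆ f = 0 := by
    rw [witt_apply]
    refine Finset.sum_eq_zero fun k _ => ?_
    rw [Derivation.commutator_apply]
    have hc : ∀ l, Dj F p n l (xg F p n k) = if k = l then 1 else 0 := by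
      intro l
      split_ifs with hl
      · rw [hl, Dj_xg_self]
      · exact Dj_xg_ne F p n hl
    rw [hc, hc]
    split_ifs <;> simp
  rw [Derivation.commutator_apply] at h
  exact sub_eq_zero.mp h

/-! ### The top-coefficient functional -/

/-- A partial derivative has no `x^τ` term: integration by parts holds for the functional
taking the coefficient of `x^τ`. -/
lemma coeffT_Dj (hp : 0 < p) (k : Fin n) (f : TruncP F p n) :
    coeffT F p n (tauE p n) (Dj F p n k f) = 0 := by
  classical
  obtain ⟨g, rfl⟩ := Ideal.Quotient.mk_surjective f
  have hb : ∀ i, tauE p n i < p := fun i => by simp only [tauE]; omega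
  rw [Dj_mk, coeffT, dif_pos hb, liftF_mk]
  show MvPolynomial.coeff _ _ = 0
  induction g using MvPolynomial.induction_on' with
  | monomial u a =>
    rw [MvPolynomial.pderiv_monomial, MvPolynomial.coeff_monomial]
    split_ifs with h
    · -- a monomial whose derivative is a multiple of `x^τ` has exponent `0` or `p` at `k`
      have h1 : u k - 1 = p - 1 := by
        have := DFunLike.congr_fun h k
        simpa [tauE] using this
      rcases Nat.eq_zero_or_pos (u k) with h0 | h0
      · simp [h0]
      · have : u k = p := by omega
        rw [this, CharP.cast_eq_zero, mul_zero]
    · rfl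
  | add a b ha hb => rw [map_add, MvPolynomial.coeff_add, ha, hb, add_zero]

lemma coeffT_tau (hp : 0 < p) :
    coeffT F p n (tauE p n) (xpow F p n (tauE p n)) = 1 := by
  have hb : ∀ i, tauE p n i < p := fun i => by simp only [tauE]; omega
  rw [xpow, coeffT, dif_pos hb, liftF_mk]
  classical
  exact (MvPolynomial.coeff_monomial _ _ _).trans (if_pos rfl)

lemma divW_eq (E : Witt F p n) : divW F p n E = ∑ i, Dj F p n i (E (xg F p n i)) := by
  simp only [divW, xpow_single, pow_one]

/-- The obstruction to lying in `S(n)`: the coefficient of `x^{τ-(p-1)ε_i} D_i`, read off as the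
coefficient of `x^τ` in `x_i^{p-1} z(x_i)`, vanishes on commutators of divergence-free
derivations, since `[D,E](x_i)` is a sum of `k`-th partial derivatives over `k ≠ i`. -/
lemma coeffT_Ssub (hp : 0 < p) (i : Fin n) {z : Witt F p n} (hz : z ∈ Ssub F p n) :
    coeffT F p n (tauE p n) (xg F p n i ^ (p - 1) * z (xg F p n i)) = 0 := by
  classical
  induction hz using Submodule.span_induction with
  | mem z h =>
    obtain ⟨D, E, hD, hE, rfl⟩ := h
    rw [divW_eq] at hD hE
    have key : xg F p n i ^ (p - 1) * ⁅D, E⁆ (xg F p n i) =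
        ∑ k, Dj F p n k (xg F p n i ^ (p - 1) *
          (D (xg F p n k) * E (xg F p n i) - E (xg F p n k) * D (xg F p n i))) := by
      have h1 : ∀ k, Dj F p n k (xg F p n i ^ (p - 1) *
          (D (xg F p n k) * E (xg F p n i) - E (xg F p n k) * D (xg F p n i))) =
          xg F p n i ^ (p - 1) *
            (D (xg F p n k) * Dj F p n k (E (xg F p n i))
              + E (xg F p n i) * Dj F p n k (D (xg F p n k))
              - E (xg F p n k) * Dj F p n k (D (xg F p n i))
              - D (xg F p n i) * Dj F p n k (E (xg F p n k))) := by
        intro k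
        rw [Derivation.leibniz, map_sub, Derivation.leibniz, Derivation.leibniz]
        simp only [smul_eq_mul]
        rcases eq_or_ne i k with rfl | hk
        · ring
        · rw [Dj_xg_pow_ne F p n hk]; ring
      rw [Finset.sum_congr rfl fun k _ => h1 k, ← Finset.mul_sum, Finset.sum_sub_distrib,
        Finset.sum_sub_distrib, Finset.sum_add_distrib, ← Finset.mul_sum, ← Finset.mul_sum,
        hD, hE, ← witt_apply, ← witt_apply, Derivation.commutator_apply]
      ring
    rw [key, map_sum]
    exact Finset.sum_eq_zero fun k _ => coeffT_Dj F p n hp k _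
  | zero => simp
  | add x y _ _ hx hy => rw [Derivation.add_apply, mul_add, map_add, hx, hy, add_zero]
  | smul c x _ hx => rw [Derivation.smul_apply, mul_smul_comm, map_smul, hx, smul_zero]

/-! ### The elements `x_i^m D_j` -/

lemma xD_single_apply (i j : Fin n) (m : ℕ) (f : TruncP F p n) :
    xD F p n (Pi.single i m) j f = xg F p n i ^ m * Dj F p n j f := by
  rw [xD, xpow_single]; rfl

lemma xD_single_zero (i j : Fin n) : xD F p n (Pi.single i 0) j = Dj F p n j := by
  ext f; rw [xD_single_apply, pow_zero, one_mul]

lemma divW_xD {i j : Fin n} (h : i ≠ j) (m : ℕ) :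
    divW F p n (xD F p n (Pi.single i m) j) = 0 := by
  rw [divW_eq]
  refine Finset.sum_eq_zero fun k _ => ?_
  rw [xD_single_apply]
  rcases eq_or_ne k j with rfl | hk
  · rw [Dj_xg_self, mul_one, Dj_xg_pow_ne F p n h]
  · rw [Dj_xg_ne F p n hk, mul_zero, map_zero]

/-- For distinct `i, j, k` one has `x_i^m D_j = [x_i^m D_k, x_k D_j]`; a third index exists
because `n ≥ 3`. -/
lemma xD_mem_Ssub (hn : 3 ≤ n) {i j : Fin n} (h : i ≠ j) (m : ℕ) :
    xD F p n (Pi.single i m) j ∈ Ssub F p n := by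
  classical
  obtain ⟨k, hk⟩ : ∃ k : Fin n, k ∉ ({i, j} : Finset (Fin n)) := by
    by_contra! hall
    have h1 : Finset.univ ⊆ ({i, j} : Finset (Fin n)) := fun k _ => hall k
    have h2 := Finset.card_le_card h1
    have h3 : ({i, j} : Finset (Fin n)).card ≤ 2 := Finset.card_le_two
    simp only [Finset.card_univ, Fintype.card_fin] at h2
    omega
  simp only [Finset.mem_insert, Finset.mem_singleton, not_or] at hk
  refine Submodule.subset_span ⟨xD F p n (Pi.single i m) k, xD F p n (Pi.single k 1) j,
    divW_xD F p n (Ne.symm hk.1) m, divW_xD F p n hk.2 1, ?_⟩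
  ext f
  rw [Derivation.commutator_apply]
  simp only [xD_single_apply, pow_one, Derivation.leibniz, smul_eq_mul, Dj_xg_self,
    Dj_xg_pow_ne F p n h, Dj_comm F p n j k]
  ring

lemma xD_mem_Wgr (hp : 0 < p) (i j : Fin n) {m : ℕ} (hm : m < p) :
    xD F p n (Pi.single i m) j ∈ Wgr F p n ((m : ℤ) - 1) := by
  classical
  refine Submodule.subset_span ⟨Pi.single i m, j, ?_, ?_, rfl⟩
  · intro k
    rw [Pi.single_apply]
    split_ifs <;> omega
  · congr 1
    rw [Finset.sum_eq_single i]
    · simp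
    · intro k _ hk
      simp [hk]
    · simp

lemma bracket_xD (i j : Fin n) (m : ℕ) :
    ⁅Dj F p n i, xD F p n (Pi.single i (m + 1)) j⁆ =
      ((m + 1 : ℕ) : F) • xD F p n (Pi.single i m) j := by
  ext f
  rw [Derivation.commutator_apply, Derivation.smul_apply]
  simp only [xD_single_apply, Derivation.leibniz, smul_eq_mul, Dj_xg_pow_self,
    Dj_comm F p n j i, mul_smul_comm]
  rw [mul_comm (Dj F p n j f), add_sub_cancel_left]

lemma iterate_bracket_xD (i j : Fin n) (N : ℕ) : ∀ m, m ≤ N →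
    (fun z => ⁅Dj F p n i, z⁆)^[m] (xD F p n (Pi.single i N) j) =
      ((N.descFactorial m : ℕ) : F) • xD F p n (Pi.single i (N - m)) j := by
  intro m
  induction m with
  | zero => intro _; simp
  | succ m ih =>
    intro hm
    rw [Function.iterate_succ_apply', ih (by omega)]
    obtain ⟨r, hr⟩ : ∃ r, N - m = r + 1 := ⟨N - m - 1, by omega⟩
    have hr' : N - (m + 1) = r := by omega
    show ⁅Dj F p n i, _⁆ = _
    have hsm : ∀ (c : F) (E : Witt F p n), ⁅Dj F p n i, c • E⁆ = c • ⁅Dj F p n i, E⁆ :=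
      fun c E => by
        ext f
        simp only [Derivation.commutator_apply, Derivation.smul_apply, Derivation.map_smul, smul_sub]
    rw [hsm, hr, bracket_xD, smul_smul, hr', Nat.descFactorial_succ, hr, Nat.cast_mul,
      mul_comm]

lemma wilson_cast (hp : p.Prime) : (((p - 1).factorial : ℕ) : F) = -1 := by
  have : Fact p.Prime := ⟨hp⟩
  have h := congrArg (ZMod.castHom (dvd_refl p) F) (ZMod.wilsons_lemma p)
  rwa [map_natCast, map_neg, map_one] at h

end Helpers

/-! ### The operators `H_Θ(D_i)` -/

/-- The cocycle `Θ` of `S(n)` (with `Θ(D_i, D_j) = D_{ij}(x^τ)`, vanishing on pairs of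
homogeneous elements not both of degree `−1`) satisfies
`H_Θ(D_i)(x_i^{p−1} D_j) = −D_{ij}(x^τ)` for `i ≠ j` (with `D_i^{[p]} = 0`); hence no
`H_Θ(D_i)` is an inner derivation of `S(n)`. -/
theorem special_theta_HOp_not_inner
    (p n : ℕ) (hp : p.Prime) (hp5 : 5 ≤ p) (hn : 3 ≤ n)
    (F : Type*) [Field F] [IsAlgClosed F] [CharP F p]
    (Θ : Witt F p n → Witt F p n → Witt F p n)
    (hbil : IsBilinear F Θ)
    (halt : ∀ x, Θ x x = 0)
    (hval : ∀ i j : Fin n, i < j →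
      Θ (Dj F p n i) (Dj F p n j) = Dij F p n i j (xpow F p n (tauE p n)))
    (hvan : ∀ c d : ℤ, ¬(c = -1 ∧ d = -1) →
      ∀ x ∈ Wgr F p n c, x ∈ Ssub F p n →
      ∀ y ∈ Wgr F p n d, y ∈ Ssub F p n → Θ x y = 0) :
    (∀ i j : Fin n, i ≠ j →
      HOp p (fun x y => ⁅x, y⁆) Θ (Dj F p n i) 0 (xD F p n (Pi.single i (p - 1)) j)
        = -Dij F p n i j (xpow F p n (tauE p n)))
    ∧ ∀ i : Fin n,
        ¬ IsInnerOn F (Ssub F p n) (fun x y => ⁅x, y⁆)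
            (HOp p (fun x y => ⁅x, y⁆) Θ (Dj F p n i) 0) := by
  have hp0 : 0 < p := hp.pos
  have hmem : ∀ i : Fin n, Dj F p n i ∈ Ssub F p n := by
    intro i
    have : Nontrivial (Fin n) := Fin.nontrivial_iff_two_le.mpr (by omega)
    obtain ⟨k, hk⟩ := exists_ne i
    have := xD_mem_Ssub F p n hn hk 0
    rwa [xD_single_zero] at this
  have hgr : ∀ i : Fin n, Dj F p n i ∈ Wgr F p n (-1) := by
    intro i
    have := xD_mem_Wgr F p n hp0 i i hp0
    rw [xD_single_zero] at this
    simpa using this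
  have hskew : ∀ x y, Θ x y = -Θ y x := by
    intro x y
    have h := halt (x + y)
    rw [(hbil.1 _).map_add, (hbil.2 x).map_add, (hbil.2 y).map_add, halt, halt] at h
    ext f
    have hf := congrArg (fun D : Witt F p n => D f) h
    simp only [Derivation.add_apply, Derivation.zero_apply, zero_add, add_zero] at hf
    rw [Derivation.neg_apply]
    exact eq_neg_of_add_eq_zero_right hf
  have hΘ : ∀ i j : Fin n, i ≠ j →
      Θ (Dj F p n i) (Dj F p n j) = Dij F p n i j (xpow F p n (tauE p n)) := by
    intro i j hij
    rcases lt_or_gt_of_ne hij with h | h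
    · exact hval i j h
    · rw [hskew, hval j i h, Dij, Dij]
      ext f
      simp only [Derivation.neg_apply, Derivation.sub_apply, neg_sub]
  have part1 : ∀ i j : Fin n, i ≠ j →
      HOp p (fun x y => ⁅x, y⁆) Θ (Dj F p n i) 0 (xD F p n (Pi.single i (p - 1)) j)
        = -Dij F p n i j (xpow F p n (tauE p n)) := by
    intro i j hij
    have h0 : Θ 0 (xD F p n (Pi.single i (p - 1)) j) = 0 := (hbil.2 _).map_zero
    rw [HOp, h0]
    have hs : ∀ E : Witt F p n, E - 0 = E := fun E => by
      ext f; simp only [Derivation.sub_apply, Derivation.zero_apply, sub_zero]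
    rw [hs]
    rw [Finset.sum_eq_single 0]
    · rw [Nat.sub_zero, iterate_bracket_xD F p n i j (p - 1) (p - 1) le_rfl, Nat.sub_self,
        xD_single_zero, Nat.descFactorial_self, wilson_cast F p hp, (hbil.1 _).map_smul,
        Function.iterate_zero, id, hΘ i j hij, neg_smul, one_smul]
    · -- for positive index `m` the second argument of `Θ` has degree `m - 1 ≥ 0`
      intro m hm hm0
      have hmp : m < p := Finset.mem_range.mp hm
      have hz : Θ (Dj F p n i) (xD F p n (Pi.single i m) j) = 0 :=
        hvan (-1) ((m : ℤ) - 1) (by omega) _ (hgr i) (hmem i) _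
          (xD_mem_Wgr F p n hp0 i j hmp) (xD_mem_Ssub F p n hn hij m)
      rw [iterate_bracket_xD F p n i j (p - 1) (p - 1 - m) (by omega), (hbil.1 _).map_smul,
        show p - 1 - (p - 1 - m) = m by omega, hz, smul_zero]
      refine Function.iterate_fixed ?_ m
      ext f
      simp only [Derivation.commutator_apply, Derivation.zero_apply, map_zero, sub_zero]
    · intro h
      exact absurd (Finset.mem_range.mpr hp0) h
  refine ⟨part1, ?_⟩
  rintro i ⟨z, hz, hzy⟩
  have : Nontrivial (Fin n) := Fin.nontrivial_iff_two_le.mpr (by omega)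
  obtain ⟨j, hji⟩ := exists_ne i
  have h1 := (part1 i j hji.symm).symm.trans
    (hzy _ (xD_mem_Ssub F p n hn hji.symm (p - 1)))
  have h2 := congrArg (fun D : Witt F p n => D (xg F p n i)) h1
  simp only [Derivation.neg_apply, Dij, Derivation.sub_apply, Derivation.smul_apply,
    Derivation.commutator_apply, xD_single_apply, Dj_xg_self, Dj_xg_ne F p n hji.symm,
    smul_eq_mul, mul_zero, mul_one, sub_zero, map_zero, zero_sub, neg_inj] at h2
  -- `D_j` kills `u = x_i^{p-1} z(x_i) - x^τ`, and `u = D_j(x_j u) - x_j D_j(u)`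
  set u := xg F p n i ^ (p - 1) * z (xg F p n i) - xpow F p n (tauE p n) with hu
  have hDu : Dj F p n j u = 0 := by
    rw [hu, map_sub, Derivation.leibniz, Dj_xg_pow_ne F p n hji.symm, smul_zero, add_zero,
      smul_eq_mul, h2, sub_self]
  have hu' : Dj F p n j (xg F p n j * u) = u := by
    rw [Derivation.leibniz, hDu, Dj_xg_self, smul_zero, zero_add, smul_eq_mul, mul_one]
  have h3 := coeffT_Dj F p n hp0 j (xg F p n j * u)
  rw [hu', hu, map_sub, coeffT_Ssub F p n hp0 i hz, coeffT_tau F p n hp0] at h3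
  simp at h3
end
end

section
/- Let n ≥ 3. For every 1 ≤ h ≤ n, all 1 ≤ r < s ≤ n, and every multi-index a ∈ {0,…,p−1}^n, the map H_{Sq(D_h)}(D_{rs}(x^a)) : S(n) → S(n) is an inner derivation of S(n), where (D_{rs}(x^a))^{[p]} is taken to be the p-fold composition of D_{rs}(x^a) as a derivation of A(n). (Hence each Sq(D_h) lies in the kernel of the Hochschild map H and defines a restricted cohomology class of S(n).) -/
set_option maxHeartbeats 1000000
set_option synthInstance.maxHeartbeats 400000

open scoped BigOperators
noncomputable section

variable (F : Type*) [Field F] (p n : ℕ)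

/-!
The operators in `W(n)` are elements of the associative algebra `R = End_F A(n)`, and the Hochschild
operator of `Sq(D)` can be computed there. For `x` in `R` put
`e(x) = ∑_{i<p} tⁱ (ad D)ⁱ(x) / i!`, a polynomial in `t` over `R` (`serE`). The Leibniz rule makes
`e` multiplicative in degrees below `p`, and modulo `t^(p+1)` one has
`[e(x), e(y)] ≡ e([x, y]) + t^p Sq(D)(x, y)` (`serE_lie`). Hence the coefficient of `t^p` in
`(ad e(x))^p e(y)` is `∑_j (ad x)^j Sq(D)(x, (ad x)^(p-1-j) y)`. In characteristic `p` the same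
element is `[e(x)^p, e(y)]`, and `e(x)^p ≡ e(x^p) + t^p w` for some `w` in `R`, so that its
coefficient of `t^p` is `Sq(D)(x^p, y) + [w, y]`. Comparison gives `H_{Sq(D)}(x) = ad w`, where `w` is
the coefficient of `t^p` in `e(x)^p` (`HOp_assoc`).

It remains to see that `w` lies in `S(n)` for `D = D_h` and `x = D_{rs}(x^a)`. It is homogeneous of
multidegree `p (a - ε_r - ε_s - ε_h)`, while the exponents of nonzero monomials lie in `[0, p-1]`;
so `w = 0` unless `a = ε_r + ε_s + ε_h`. In that case:

* if `h` is different from `r` and `s`, then `e(x) = (x_h + t) (x_r D_r - x_s D_s)` and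
  `w = x_r D_r - x_s D_s = [x_r D_s, x_s D_r]`, which lies in `S(n)`;
* if `h = r`, then `e(x) = y G` with `y = x_r + t` and `G = y D_r - 2 x_s D_s`. As `[G, y] = y`,
  the `p`-th power is `y^p G (G + 1) ⋯ (G + p - 1)` with `y^p = t^p`, so `w` acts on `x^b` as the
  product of the `b_r - 2 b_s + j` for `j < p`, which is zero;
* the case `h = s` follows from the case `h = r` because `D_{rs} = -D_{sr}`.
-/

/-! ### Truncated exponentials and the Hochschild operator in an associative algebra -/

section Abstract

open Polynomial Finset

variable {R : Type*} [Ring R] [Algebra F R]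

/-- The truncated exponential `∑_{i<p} tⁱ (ad D)ⁱ(x) / i!`, as a polynomial in `t` over `R`. -/
def serE (D x : R) : R[X] :=
  ∑ i ∈ range p, monomial i (((i.factorial : ℕ) : F)⁻¹ • (fun y => ⁅D, y⁆)^[i] x)

/-- Congruence of polynomials modulo `t^(p+1)`. -/
def EqMod {R : Type*} [Ring R] (p : ℕ) (P Q : R[X]) : Prop := ∀ k ≤ p, P.coeff k = Q.coeff k

section EqMod
variable {R : Type*} [Ring R] {p : ℕ} {P P' Q Q' : R[X]}

lemma EqMod.trans (h : EqMod p P P') (h' : EqMod p P' Q) : EqMod p P Q :=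
  fun k hk => (h k hk).trans (h' k hk)

lemma EqMod.mul (h : EqMod p P P') (h' : EqMod p Q Q') : EqMod p (P * Q) (P' * Q') := by
  intro k hk
  rw [coeff_mul, coeff_mul]
  refine sum_congr rfl fun ij hij => ?_
  have := HasAntidiagonal.mem_antidiagonal.mp hij
  rw [h _ (by omega), h' _ (by omega)]

lemma EqMod.sub (h : EqMod p P P') (h' : EqMod p Q Q') : EqMod p (P - Q) (P' - Q') := by
  intro k hk
  rw [coeff_sub, coeff_sub, h k hk, h' k hk]

lemma EqMod.add (h : EqMod p P P') (h' : EqMod p Q Q') : EqMod p (P + Q) (P' + Q') := by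
  intro k hk
  rw [coeff_add, coeff_add, h k hk, h' k hk]

lemma EqMod.lie (h : EqMod p P P') (h' : EqMod p Q Q') : EqMod p ⁅P, Q⁆ ⁅P', Q'⁆ :=
  (h.mul h').sub (h'.mul h)

lemma EqMod.mono_mul (s : R) : EqMod p (monomial p s * Q) (monomial p (s * Q.coeff 0)) := by
  intro k hk
  rw [← C_mul_X_pow_eq_monomial, mul_assoc, coeff_C_mul, coeff_X_pow_mul', coeff_monomial]
  rcases hk.lt_or_eq with h | rfl
  · rw [if_neg (by omega), if_neg (by omega), mul_zero]
  · simp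

lemma EqMod.mul_mono (s : R) : EqMod p (Q * monomial p s) (monomial p (Q.coeff 0 * s)) := by
  intro k hk
  rw [← C_mul_X_pow_eq_monomial, ← mul_assoc, coeff_mul_X_pow', coeff_monomial]
  rcases hk.lt_or_eq with h | rfl
  · rw [if_neg (by omega), if_neg (by omega)]
  · simp

end EqMod

section RingBracket
variable {R : Type*} [Ring R]

lemma rlie_add (x y z : R) : ⁅x, y + z⁆ = ⁅x, y⁆ + ⁅x, z⁆ := by
  simp only [Ring.lie_def]; noncomm_ring

lemma add_rlie (x y z : R) : ⁅x + y, z⁆ = ⁅x, z⁆ + ⁅y, z⁆ := by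
  simp only [Ring.lie_def]; noncomm_ring

lemma rlie_sub (x y z : R) : ⁅x, y - z⁆ = ⁅x, y⁆ - ⁅x, z⁆ := by
  simp only [Ring.lie_def]; noncomm_ring

lemma rlie_sum {ι : Type*} (s : Finset ι) (x : R) (f : ι → R) :
    ⁅x, ∑ i ∈ s, f i⁆ = ∑ i ∈ s, ⁅x, f i⁆ := by
  simp only [Ring.lie_def, mul_sum, sum_mul, sum_sub_distrib]

lemma rlie_nsmul (k : ℕ) (x y : R) : ⁅x, k • y⁆ = k • ⁅x, y⁆ := by
  simp only [Ring.lie_def, mul_smul_comm, smul_mul_assoc, smul_sub]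

end RingBracket

lemma iter_lie_sub (D x y : R) (k : ℕ) :
    (fun y => ⁅D, y⁆)^[k] (x - y) = (fun y => ⁅D, y⁆)^[k] x - (fun y => ⁅D, y⁆)^[k] y := by
  induction k with
  | zero => rfl
  | succ k ih => simp only [Function.iterate_succ_apply', ih, rlie_sub]

lemma iter_lie_mul (D x y : R) (k : ℕ) :
    (fun y => ⁅D, y⁆)^[k] (x * y) = ∑ ij ∈ antidiagonal k, k.choose ij.1 •
      ((fun y => ⁅D, y⁆)^[ij.1] x * (fun y => ⁅D, y⁆)^[ij.2] y) := by
  induction k with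
  | zero => simp
  | succ k ih =>
    rw [sum_antidiagonal_choose_succ_nsmul
      (fun i j => (fun y => ⁅D, y⁆)^[i] x * (fun y => ⁅D, y⁆)^[j] y) k,
      Function.iterate_succ_apply', ih, rlie_sum, ← sum_add_distrib]
    refine sum_congr rfl fun ij hij => ?_
    rw [HasAntidiagonal.mem_antidiagonal] at hij
    rw [← Nat.choose_symm_of_eq_add hij.symm, ← smul_add, rlie_nsmul]
    congr 1
    simp only [Function.iterate_succ_apply', Ring.lie_def]
    noncomm_ring

variable {p}

lemma serE_coeff (D x : R) (k : ℕ) : (serE F p D x).coeff k =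
    if k < p then (((k.factorial : ℕ) : F)⁻¹ • (fun y => ⁅D, y⁆)^[k] x) else 0 := by
  simp only [serE, finsetSum_coeff, coeff_monomial]
  rw [sum_ite_eq' ]
  simp

lemma serE_sub (D x y : R) : serE F p D (x - y) = serE F p D x - serE F p D y := by
  ext k
  rw [coeff_sub, serE_coeff, serE_coeff, serE_coeff, iter_lie_sub]
  split_ifs <;> simp [smul_sub]

/-- The associative counterpart of `Squaring`:
`∑_{0<i<p} (ad D)ⁱ(x) · (ad D)^{p-i}(y) / (i! (p-i)!)`. -/
def cupSq (p : ℕ) (D x y : R) : R :=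
  ∑ i ∈ Ioo 0 p, (((i.factorial * (p - i).factorial : ℕ) : F))⁻¹ •
    ((fun y => ⁅D, y⁆)^[i] x * (fun y => ⁅D, y⁆)^[p - i] y)

lemma SqE_eq_cupSq (D x y : R) :
    SqE F p (fun x y => ⁅x, y⁆) D x y = cupSq F p D x y - cupSq F p D y x := by
  have h : cupSq F p D y x = ∑ i ∈ Ioo 0 p, (((i.factorial * (p - i).factorial : ℕ) : F))⁻¹ •
    ((fun y => ⁅D, y⁆)^[p - i] y * (fun y => ⁅D, y⁆)^[i] x) := by
    refine sum_nbij' (fun i => p - i) (fun i => p - i) ?_ ?_ ?_ ?_ ?_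
    · intro i hi; simp only [mem_Ioo] at *; omega
    · intro i hi; simp only [mem_Ioo] at *; omega
    · intro i hi; simp only [mem_Ioo] at *; omega
    · intro i hi; simp only [mem_Ioo] at *; omega
    · intro i hi
      simp only [mem_Ioo] at hi
      rw [Nat.sub_sub_self hi.2.le, mul_comm (p - i).factorial]
  rw [h, cupSq, ← sum_sub_distrib]
  simp only [SqE, Squaring]
  refine sum_congr rfl fun i _ => ?_
  rw [← smul_sub, Ring.lie_def]

variable [CharP F p]

include F in
lemma fact_ne (hp : p.Prime) {k : ℕ} (hk : k < p) : ((k.factorial : ℕ) : F) ≠ 0 := by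
  rw [Ne, CharP.cast_eq_zero_iff F p, hp.dvd_factorial]
  omega

/-- The truncated exponential fails to be multiplicative, first in degree `p`,
and there the defect is `cupSq`. -/
lemma serE_mul (hp : p.Prime) (D x y : R) :
    EqMod p (serE F p D x * serE F p D y)
      (serE F p D (x * y) + monomial p (cupSq F p D x y)) := by
  intro k hk
  rw [coeff_mul, coeff_add, coeff_monomial, serE_coeff]
  simp only [serE_coeff]
  rcases hk.lt_or_eq with h | rfl
  · rw [if_pos h, if_neg (by omega), add_zero, iter_lie_mul, smul_sum]
    refine sum_congr rfl fun ij hij => ?_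
    rw [HasAntidiagonal.mem_antidiagonal] at hij
    rw [if_pos (by omega), if_pos (by omega), smul_mul_smul_comm, ← Nat.cast_smul_eq_nsmul F,
      smul_smul]
    congr 1
    have h1 := fact_ne F hp (k := ij.1) (by omega)
    have h2 := fact_ne F hp (k := ij.2) (by omega)
    have h3 := fact_ne F hp h
    have h4 : ((k.choose ij.1 : ℕ) : F) * ij.1.factorial * ij.2.factorial = k.factorial := by
      have := Nat.choose_mul_factorial_mul_factorial (Nat.le_add_right ij.1 ij.2)
      rw [Nat.add_sub_cancel_left, hij] at this
      rw [← this]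
      push_cast
      ring
    field_simp
    rw [← h4]; ring
  · rw [if_neg (lt_irrefl _), if_pos rfl, zero_add, Nat.sum_antidiagonal_eq_sum_range_succ_mk, cupSq]
    symm
    have hs : Ioo 0 k ⊆ range (k + 1) := fun i hi => by
      simp only [mem_Ioo, mem_range] at *; omega
    rw [← sum_subset hs]
    · refine sum_congr rfl fun i hi => ?_
      simp only [mem_Ioo] at hi
      rw [if_pos (by omega), if_pos (by omega), smul_mul_smul_comm, Nat.cast_mul, mul_inv]
    · intro i hi hi'
      simp only [mem_Ioo, mem_range] at *
      rcases Nat.eq_zero_or_pos i with rfl | h0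
      · simp
      · rw [if_neg (by omega), zero_mul]

/-- The truncated exponential is a Lie homomorphism modulo `t^(p+1)`, up to the defect
`t^p Sq(D)`. -/
lemma serE_lie (hp : p.Prime) (D x y : R) :
    EqMod p ⁅serE F p D x, serE F p D y⁆
      (serE F p D ⁅x, y⁆ + monomial p (SqE F p (fun x y => ⁅x, y⁆) D x y)) := by
  have := (serE_mul F hp D x y).sub (serE_mul F hp D y x)
  rw [SqE_eq_cupSq, Ring.lie_def x y, serE_sub, map_sub, ← add_sub_add_comm]
  exact this

omit [CharP F p] in
lemma serE_coeff_zero (hp : p.Prime) (D x : R) : (serE F p D x).coeff 0 = x := by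
  rw [serE_coeff, if_pos hp.pos]; simp

/-- Taking powers commutes with the truncated exponential, up to a term in degree `p` that is not
made explicit. -/
lemma serE_pow (hp : p.Prime) (D x : R) (k : ℕ) (hk : 1 ≤ k) :
    ∃ w, EqMod p (serE F p D x ^ k) (serE F p D (x ^ k) + monomial p w) := by
  induction k, hk using Nat.le_induction with
  | base => exact ⟨0, by intro k _; simp⟩
  | succ k hk ih =>
    obtain ⟨w, hw⟩ := ih
    refine ⟨cupSq F p D (x ^ k) x + w * x, ?_⟩
    rw [pow_succ, pow_succ]
    refine (hw.mul (fun _ _ => rfl)).trans ?_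
    rw [add_mul, map_add, ← add_assoc]
    refine (serE_mul F hp D _ _).add ?_
    have := EqMod.mono_mul (p := p) (Q := serE F p D x) w
    rwa [serE_coeff_zero F hp] at this

/-- Iterating `serE_lie`: the defect of `(ad e(x))ᵏ e(y)` in degree `p` collects the terms of the
sum that defines `HOp`. -/
lemma serE_ad_pow (hp : p.Prime) (D x y : R) (k : ℕ) :
    EqMod p ((fun z => ⁅serE F p D x, z⁆)^[k] (serE F p D y))
      (serE F p D ((fun z => ⁅x, z⁆)^[k] y) + monomial p (∑ j ∈ range k,
        (fun z => ⁅x, z⁆)^[j] (SqE F p (fun x y => ⁅x, y⁆) D x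
          ((fun z => ⁅x, z⁆)^[k - 1 - j] y)))) := by
  induction k with
  | zero => intro k _; simp
  | succ k ih =>
    rw [Function.iterate_succ_apply']
    refine ((EqMod.lie (P := serE F p D x) (fun _ _ => rfl) ih)).trans ?_
    rw [rlie_add, sum_range_succ', Function.iterate_succ_apply' (fun z => ⁅x, z⁆)]
    have h1 := serE_lie F hp D x ((fun z => ⁅x, z⁆)^[k] y)
    set S := ∑ j ∈ range k, (fun z => ⁅x, z⁆)^[j] (SqE F p (fun x y => ⁅x, y⁆) D x
          ((fun z => ⁅x, z⁆)^[k - 1 - j] y)) with hS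
    have h2 : EqMod p ⁅serE F p D x, monomial p S⁆ (monomial p ⁅x, S⁆) := by
      have h3 := EqMod.mono_mul (p := p) (Q := serE F p D x) S
      have h4 := EqMod.mul_mono (p := p) (Q := serE F p D x) S
      rw [serE_coeff_zero F hp] at h3 h4
      rw [Ring.lie_def x, map_sub]
      exact h4.sub h3
    convert h1.add h2 using 1
    rw [hS, rlie_sum, add_assoc, ← map_add]
    congr 2
    rw [add_comm]
    congr 1
    refine sum_congr rfl fun j hj => ?_
    rw [Function.iterate_succ_apply']
    congr 4
    omega

/-- In characteristic `p`, `(ad X)^p = ad (X^p)`. -/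
lemma iter_lie_char (hp : p.Prime) {S : Type*} [Ring S] [Algebra F S] (X Y : S) :
    (fun z => ⁅X, z⁆)^[p] Y = ⁅X ^ p, Y⁆ := by
  rcases subsingleton_or_nontrivial S with hS | hS
  · exact Subsingleton.elim _ _
  have : Fact p.Prime := ⟨hp⟩
  have : CharP (Module.End F S) p :=
    charP_of_injective_algebraMap (algebraMap F (Module.End F S)).injective p
  have hc : Commute (LinearMap.mulLeft F X) (LinearMap.mulRight F X) :=
    LinearMap.commute_mulLeft_right _ _
  have h := sub_pow_char_of_commute (p := p) hc
  have h2 : (fun z => ⁅X, z⁆) = ⇑(LinearMap.mulLeft F X - LinearMap.mulRight F X) := by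
    ext z; simp [Ring.lie_def]
  rw [h2, ← Module.End.pow_apply, h]
  simp [Ring.lie_def]

/-- In an associative algebra of characteristic `p`, the Hochschild operator of `Sq(D)` at `x`
is the commutator with the degree-`p` coefficient of the `p`-th power of the truncated
exponential of `t · ad D` at `x`. -/
lemma HOp_assoc (hp : p.Prime) (D x y : R) :
    HOp p (fun x y => ⁅x, y⁆) (SqE F p (fun x y => ⁅x, y⁆) D) x (x ^ p) y
      = ⁅(serE F p D x ^ p).coeff p, y⁆ := by
  have h1 := serE_ad_pow F hp D x y p
  rw [iter_lie_char F hp, iter_lie_char F hp] at h1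
  obtain ⟨w, hw⟩ := serE_pow F hp D x p hp.one_le
  have hw2 := hw p le_rfl
  rw [coeff_add, serE_coeff, if_neg (lt_irrefl _), zero_add, coeff_monomial_same] at hw2
  rw [hw2]
  have h2 := EqMod.lie hw (Q := serE F p D y) (fun _ _ => rfl)
  rw [add_rlie] at h2
  have h3 : EqMod p ⁅monomial p w, serE F p D y⁆ (monomial p ⁅w, y⁆) := by
    have h3 := EqMod.mono_mul (p := p) (Q := serE F p D y) w
    have h4 := EqMod.mul_mono (p := p) (Q := serE F p D y) w
    rw [serE_coeff_zero F hp] at h3 h4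
    rw [Ring.lie_def w, map_sub]
    exact h3.sub h4
  have h4 := h2.trans ((serE_lie F hp D (x ^ p) y).add h3)
  have h5 := (h1 p le_rfl).symm.trans (h4 p le_rfl)
  simp only [coeff_add, serE_coeff, lt_irrefl, if_false, zero_add, coeff_monomial_same] at h5
  rw [HOp, h5]
  abel

end Abstract

/-! ### Two computations in the Weyl algebra -/

section Weyl

open Polynomial Finset

/-- The rising factorial `G (G + 1) ⋯ (G + k - 1)`. -/
def risingF {S : Type*} [Ring S] (G : S) : ℕ → S
  | 0 => 1
  | k + 1 => (G + k) * risingF G k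

section
variable {S : Type*} [Ring S]

lemma map_risingF {S' : Type*} [Ring S'] (φ : S →+* S') (G : S) (k : ℕ) :
    φ (risingF G k) = risingF (φ G) k := by
  induction k with
  | zero => simp [risingF]
  | succ k ih => simp [risingF, ih]

/-- If `[G, y] = y`, then `(y G)ᵏ` is `yᵏ` times a rising factorial. -/
lemma mul_pow_risingF {y G : S} (h : G * y = y * (G + 1)) (k : ℕ) :
    (y * G) ^ k = y ^ k * risingF G k := by
  have h1 : ∀ k : ℕ, G * y ^ k = y ^ k * (G + k) := by
    intro k
    induction k with
    | zero => simp
    | succ k ih =>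
      rw [pow_succ, ← mul_assoc, ih, mul_assoc, add_mul, h, (Nat.cast_commute k y).eq, ← mul_add,
        mul_assoc]
      push_cast
      congr 2
      abel
  induction k with
  | zero => simp [risingF]
  | succ k ih =>
    rw [pow_succ', ih, risingF, mul_assoc, ← mul_assoc G, h1, pow_succ']
    simp only [mul_assoc]

end

variable {R : Type*} [Ring R] [Algebra F R] {p}

lemma serE_of_iter_eq_zero (hp3 : 3 ≤ p) {D x : R} (h : ⁅D, ⁅D, ⁅D, x⁆⁆⁆ = 0) :
    serE F p D x = C x + C ⁅D, x⁆ * X + C ((2 : F)⁻¹ • ⁅D, ⁅D, x⁆⁆) * X ^ 2 := by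
  have hz : ∀ k, (fun y => ⁅D, y⁆)^[k + 3] x = 0 := by
    intro k
    induction k with
    | zero => exact h
    | succ k ih =>
      rw [show k + 1 + 3 = (k + 3) + 1 by ring, Function.iterate_succ_apply', ih]
      simp [Ring.lie_def]
  rw [serE, ← sum_subset (range_subset_range.mpr hp3)]
  · simp [sum_range_succ, C_mul_X_pow_eq_monomial, C_mul_X_eq_monomial]
  · intro i _ hi
    obtain ⟨k, rfl⟩ := Nat.exists_eq_add_of_le' (not_lt.mp (mem_range.not.mp hi))
    rw [hz, smul_zero, map_zero]

variable [CharP F p]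

include F in
/-- `(C a + t) ^ p = C (a ^ p) + t ^ p` in characteristic `p`. -/
lemma C_add_X_pow_char (hp : p.Prime) (a : R) : (C a + X) ^ p = C (a ^ p) + X ^ p := by
  rcases subsingleton_or_nontrivial R with hS | hS
  · exact Subsingleton.elim _ _
  have : Fact p.Prime := ⟨hp⟩
  have : CharP R p := charP_of_injective_algebraMap (algebraMap F R).injective p
  rw [add_pow_char_of_commute (p := p) (commute_X _).symm, C_pow]

/-- Here the truncated exponential is `(X₀ + t) T`, with commuting factors. -/
lemma coeff_serE_pow_of_commute (hp : p.Prime) (hp5 : 5 ≤ p) {D X₀ T : R}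
    (hX : D * X₀ = X₀ * D + 1) (hDT : Commute D T) (hXT : Commute X₀ T) :
    (serE F p D (X₀ * T) ^ p).coeff p = T ^ p := by
  have h1 : ⁅D, X₀ * T⁆ = T := by
    rw [Ring.lie_def, ← mul_assoc, hX, mul_assoc X₀ T, ← hDT.eq]; noncomm_ring
  have h2 : ⁅D, T⁆ = 0 := by rw [Ring.lie_def, hDT.eq, sub_self]
  have h3 : ⁅D, (0 : R)⁆ = 0 := by simp [Ring.lie_def]
  rw [serE_of_iter_eq_zero F (by omega) (by rw [h1, h2, h3]), h1, h2]
  have h4 : C (X₀ * T) + C T * X + C ((2 : F)⁻¹ • (0 : R)) * X ^ 2 = (C X₀ + X) * C T := by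
    rw [smul_zero, map_zero, zero_mul, add_zero, add_mul, C_mul, X_mul_C]
  have h5 : Commute (C X₀ + X) (C T) := by
    refine Commute.add_left ?_ (commute_X _)
    rw [Commute, SemiconjBy, ← C_mul, ← C_mul, hXT.eq]
  rw [h4, h5.mul_pow, C_add_X_pow_char F hp, ← C_pow, coeff_mul_C, coeff_add, coeff_X_pow_self,
    coeff_C, if_neg hp.ne_zero, zero_add, one_mul]

/-- Here the truncated exponential is `y (y D - 2 B)` with `y = X₀ + t`, and `y^p = t^p`. -/
lemma coeff_serE_pow_of_weyl (hp : p.Prime) (hp5 : 5 ≤ p) {D X₀ B : R}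
    (hX : D * X₀ = X₀ * D + 1) (hDB : Commute D B) (hXB : Commute X₀ B) (hX0 : X₀ ^ p = 0) :
    (serE F p D (X₀ * (X₀ * D - 2 * B)) ^ p).coeff p = risingF (X₀ * D - 2 * B) p := by
  have hDB' : D * B = B * D := hDB.eq
  have hXB' : X₀ * B = B * X₀ := hXB.eq
  have h1 : ⁅D, X₀ * (X₀ * D - 2 * B)⁆ = 2 * (X₀ * D - B) := by
    have e1 : D * (X₀ * (X₀ * D - 2 * B)) =
        (D * X₀) * X₀ * D - 2 * ((D * X₀) * B) := by noncomm_ring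
    rw [Ring.lie_def, e1, hX, add_mul, add_mul, one_mul, mul_assoc X₀ D X₀, hX,
      add_mul, one_mul, mul_assoc X₀ D B, hDB']
    noncomm_ring
  have h2 : ⁅D, 2 * (X₀ * D - B)⁆ = 2 * D := by
    have e1 : D * (2 * (X₀ * D - B)) = 2 * ((D * X₀) * D - D * B) := by noncomm_ring
    rw [Ring.lie_def, e1, hX, hDB']
    noncomm_ring
  have h3 : ⁅D, 2 * D⁆ = 0 := by rw [Ring.lie_def]; noncomm_ring
  have h20 : (2 : F) ≠ 0 := by
    have := fact_ne F hp (k := 2) (by omega)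
    simpa using this
  have h4 : (2 : F)⁻¹ • (2 * D) = D := by
    rw [two_mul, ← two_smul F D, smul_smul, inv_mul_cancel₀ h20, one_smul]
  rw [serE_of_iter_eq_zero F (by omega) (by rw [h1, h2, h3]), h1, h2, h4]
  have hy : C D * (C X₀ + X) = (C X₀ + X) * C D + 1 := by
    rw [mul_add, ← C_mul, hX, add_mul, X_mul_C, C_add, C_mul, C_1]; abel
  have hyB : (C X₀ + X) * C B = C B * (C X₀ + X) := by
    rw [add_mul, mul_add, ← C_mul, ← C_mul, hXB', X_mul_C]
  set y : R[X] := C X₀ + X with hydef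
  have hE : C (X₀ * (X₀ * D - 2 * B)) + C (2 * (X₀ * D - B)) * X + C D * X ^ 2
      = y * (y * C D - 2 * C B) := by
    have hXD : X * C D = C D * X := X_mul_C D
    have hXX : X * C X₀ = C X₀ * X := X_mul_C X₀
    have hXB2 : X * C B = C B * X := X_mul_C B
    have e1 : y * (y * C D - 2 * C B) = C X₀ * C X₀ * C D + C X₀ * (X * C D)
        + (X * C X₀) * C D + X * (X * C D) - 2 * (C X₀ * C B) - 2 * (X * C B) := by
      rw [hydef]; noncomm_ring
    rw [e1, hXX, hXB2, mul_assoc (C X₀) X, hXD, ← mul_assoc X, hXD]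
    simp only [map_sub, map_mul, map_ofNat]
    noncomm_ring
  have hG : (y * C D - 2 * C B) * y = y * ((y * C D - 2 * C B) + 1) := by
    have e1 : (y * C D - 2 * C B) * y = y * (C D * y) - 2 * (C B * y) := by noncomm_ring
    rw [e1, hy, ← hyB]
    noncomm_ring
  rw [hE, mul_pow_risingF hG, hydef, C_add_X_pow_char F hp, hX0, map_zero, zero_add, ← hydef]
  have h5 := coeff_X_pow_mul (risingF (y * C D - 2 * C B) p) p 0
  rw [zero_add] at h5
  rw [h5, ← constantCoeff_apply, map_risingF]
  congr 1
  simp [hydef]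

end Weyl

/-! ### Multiplication and differentiation operators on the truncated polynomial algebra -/

section Operators

open Finset

/-- Inclusion of `W(n)` into the associative algebra of linear endomorphisms of `A(n)`. -/
def toEndW : Witt F p n →ₗ[F] Module.End F (TruncP F p n) where
  toFun E := (E : TruncP F p n →ₗ[F] TruncP F p n)
  map_add' _ _ := rfl
  map_smul' _ _ := rfl

/-- Multiplication by `f`, as an endomorphism of `A(n)`. -/
abbrev mulOp (f : TruncP F p n) : Module.End F (TruncP F p n) := LinearMap.mulLeft F f

/-- The variable `x_i`, as an element of `A(n)`. -/
def xv (i : Fin n) : TruncP F p n := xpow F p n (Pi.single i 1)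

lemma xpow_add (a b : Fin n → ℕ) : xpow F p n (a + b) = xpow F p n a * xpow F p n b := by
  rw [xpow, xpow, xpow, ← map_mul, MvPolynomial.monomial_mul, one_mul]
  congr 2
  congr 1
  ext j
  rfl

lemma xpow_eq_zero {a : Fin n → ℕ} {i : Fin n} (h : p ≤ a i) : xpow F p n a = 0 := by
  have h1 : xpow F p n (Pi.single i p) = 0 := by
    refine Ideal.Quotient.eq_zero_iff_mem.mpr (Ideal.subset_span ⟨i, ?_⟩)
    simp only [MvPolynomial.X_pow_eq_monomial]
    congr 1
    ext j
    simp
  have h2 : a = Pi.single i p + (a - Pi.single i p) := by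
    ext j
    rcases eq_or_ne j i with rfl | hj
    · simp [h]
    · simp [hj]
  rw [h2, xpow_add, h1, zero_mul]

lemma xv_pow (i : Fin n) (k : ℕ) : xv F p n i ^ k = xpow F p n (Pi.single i k) := by
  induction k with
  | zero =>
    rw [pow_zero, Pi.single_zero, xpow,
      show Finsupp.equivFunOnFinite.symm (0 : Fin n → ℕ) = 0 from Finsupp.ext fun _ => rfl]
    exact (map_one (Ideal.Quotient.mk (truncIdeal F p n))).symm
  | succ k ih => rw [pow_succ, ih, xv, ← xpow_add, ← Pi.single_add]

lemma span_xpow : Submodule.span F (Set.range (xpow F p n)) = ⊤ := by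
  rw [eq_top_iff]
  rintro u -
  obtain ⟨f, rfl⟩ := Ideal.Quotient.mk_surjective u
  induction f using MvPolynomial.induction_on' with
  | monomial b c =>
    have : Ideal.Quotient.mk (truncIdeal F p n) (MvPolynomial.monomial b c)
        = c • xpow F p n b := by
      rw [xpow, ← Ideal.Quotient.mkₐ_eq_mk F, ← map_smul, MvPolynomial.smul_monomial, smul_eq_mul,
        mul_one]
      congr 2
      congr 1
      ext j
      rfl
    rw [this]
    exact Submodule.smul_mem _ _ (Submodule.subset_span ⟨_, rfl⟩)
  | add f g hf hg => rw [map_add]; exact Submodule.add_mem _ hf hg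

lemma end_ext {f g : Module.End F (TruncP F p n)}
    (h : ∀ b, f (xpow F p n b) = g (xpow F p n b)) : f = g := by
  refine LinearMap.ext_on (span_xpow F p n) ?_
  rintro _ ⟨b, rfl⟩
  exact h b

variable [CharP F p]

/-- The partial derivative `D_j`, as an endomorphism of `A(n)`. -/
abbrev dOp (j : Fin n) : Module.End F (TruncP F p n) := toEndW F p n (Dj F p n j)

lemma Dj_xpow (j : Fin n) (b : Fin n → ℕ) :
    Dj F p n j (xpow F p n b) = (b j : F) • xpow F p n (b - Pi.single j 1) := by
  change DjL F p n j (xpow F p n b) = _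
  rw [xpow, DjL_mk, MvPolynomial.pderiv_monomial, xpow, ← Ideal.Quotient.mkₐ_eq_mk F, ← map_smul,
    MvPolynomial.smul_monomial,
    smul_eq_mul, one_mul, mul_one]
  congr 2
  congr 1
  ext i
  simp [Finsupp.single_apply, Pi.single_apply, eq_comm]

lemma Dj_xv (i j : Fin n) : Dj F p n i (xv F p n j) = if i = j then 1 else 0 := by
  rw [xv, Dj_xpow]
  rcases eq_or_ne i j with rfl | h
  · rw [if_pos rfl, Pi.single_eq_same, Nat.cast_one, one_smul, tsub_self, ← Pi.single_zero i,
      ← xv_pow, pow_zero]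
  · simp [h]

lemma xv_mul_Dj (j : Fin n) (b : Fin n → ℕ) :
    xv F p n j * Dj F p n j (xpow F p n b) = (b j : F) • xpow F p n b := by
  rw [Dj_xpow, mul_smul_comm, xv, ← xpow_add]
  rcases Nat.eq_zero_or_pos (b j) with h | h
  · simp [h]
  · congr 2
    ext i
    rcases eq_or_ne i j with rfl | hi
    · simp; omega
    · simp [hi]

lemma dOp_mul_mulOp (j : Fin n) (f : TruncP F p n) :
    dOp F p n j * mulOp F p n f = mulOp F p n f * dOp F p n j + mulOp F p n (Dj F p n j f) := by
  refine LinearMap.ext fun u => ?_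
  change Dj F p n j (f * u) = f * Dj F p n j u + Dj F p n j f * u
  rw [Derivation.leibniz, smul_eq_mul, smul_eq_mul, mul_comm u]

lemma dOp_comm (i j : Fin n) : Commute (dOp F p n i) (dOp F p n j) := by
  refine end_ext F p n fun b => ?_
  change Dj F p n i (Dj F p n j (xpow F p n b)) = Dj F p n j (Dj F p n i (xpow F p n b))
  rw [Dj_xpow, Dj_xpow, Derivation.map_smul, Derivation.map_smul, Dj_xpow, Dj_xpow, smul_smul,
    smul_smul, tsub_tsub, tsub_tsub, add_comm (Pi.single j 1)]
  congr 1
  rcases eq_or_ne i j with rfl | h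
  · rfl
  · simp [h, h.symm, mul_comm]

omit [CharP F p] in
lemma mulOp_comm (f g : TruncP F p n) : Commute (mulOp F p n f) (mulOp F p n g) := by
  refine LinearMap.ext fun u => ?_
  change f * (g * u) = g * (f * u)
  ring

omit [CharP F p] in
lemma mulOp_mul (f g : TruncP F p n) : mulOp F p n (f * g) = mulOp F p n f * mulOp F p n g :=
  LinearMap.mulLeft_mul F _ f g

lemma dOp_mul_xv (j : Fin n) : dOp F p n j * mulOp F p n (xv F p n j)
    = mulOp F p n (xv F p n j) * dOp F p n j + 1 := by
  rw [dOp_mul_mulOp, Dj_xv, if_pos rfl]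
  congr 1
  exact LinearMap.mulLeft_one F _

lemma dOp_comm_xv {i j : Fin n} (h : i ≠ j) :
    Commute (dOp F p n i) (mulOp F p n (xv F p n j)) := by
  have := dOp_mul_mulOp F p n i (xv F p n j)
  rw [Dj_xv, if_neg h] at this
  rw [Commute, SemiconjBy, this, add_eq_left]
  exact LinearMap.mulLeft_zero_eq_zero F _

lemma toEndW_Dij (r s : Fin n) (f : TruncP F p n) : toEndW F p n (Dij F p n r s f) =
    mulOp F p n (Dj F p n s f) * dOp F p n r - mulOp F p n (Dj F p n r f) * dOp F p n s := rfl

/-- The Euler operator `x_j D_j` acts on `x^b` as the scalar `b_j`. -/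
lemma euler_apply (j : Fin n) (b : Fin n → ℕ) :
    (mulOp F p n (xv F p n j) * dOp F p n j) (xpow F p n b) = (b j : F) • xpow F p n b :=
  xv_mul_Dj F p n j b

end Operators

/-! ### The grading by the exponent of one variable -/

section Shift

open Finset Polynomial

/-- The span of the monomials whose exponent at the coordinate `i` is `m`. -/
def Gcomp (i : Fin n) (m : ℤ) : Submodule F (TruncP F p n) :=
  Submodule.span F {u | ∃ b : Fin n → ℕ, (b i : ℤ) = m ∧ u = xpow F p n b}

/-- An operator on `A(n)` that is homogeneous of degree `v` for the grading by the exponent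
of `x_i`. -/
def Shift (i : Fin n) (v : ℤ) (f : Module.End F (TruncP F p n)) : Prop :=
  ∀ m, ∀ u ∈ Gcomp F p n i m, f u ∈ Gcomp F p n i (m + v)

lemma Gcomp_eq_zero (i : Fin n) {m : ℤ} (hm : m < 0 ∨ p ≤ m) {u : TruncP F p n}
    (hu : u ∈ Gcomp F p n i m) : u = 0 := by
  induction hu using Submodule.span_induction with
  | mem u hu =>
    obtain ⟨b, hb, rfl⟩ := hu
    exact xpow_eq_zero F p n (i := i) (by omega)
  | zero => rfl
  | add u v _ _ hu hv => rw [hu, hv, add_zero]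
  | smul c u _ hu => rw [hu, smul_zero]

variable {F p n}
variable {i : Fin n} {v w : ℤ} {f g : Module.End F (TruncP F p n)}

lemma Shift.of_xpow (h : ∀ b, f (xpow F p n b) ∈ Gcomp F p n i (b i + v)) :
    Shift F p n i v f := by
  intro m u hu
  induction hu using Submodule.span_induction with
  | mem u hu =>
    obtain ⟨b, rfl, rfl⟩ := hu
    exact h b
  | zero => simp
  | add u v _ _ hu hv => rw [map_add]; exact Submodule.add_mem _ hu hv
  | smul c u _ hu => rw [map_smul]; exact Submodule.smul_mem _ _ hu

lemma Shift.mul (hf : Shift F p n i v f) (hg : Shift F p n i w g) :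
    Shift F p n i (v + w) (f * g) := by
  intro m u hu
  have := hf _ _ (hg _ _ hu)
  rwa [add_assoc, add_comm w] at this

lemma Shift.sub (hf : Shift F p n i v f) (hg : Shift F p n i v g) :
    Shift F p n i v (f - g) :=
  fun m u hu => Submodule.sub_mem _ (hf m u hu) (hg m u hu)

lemma Shift.smul (c : F) (hf : Shift F p n i v f) : Shift F p n i v (c • f) :=
  fun m u hu => Submodule.smul_mem _ c (hf m u hu)

lemma Shift.zero : Shift F p n i v (0 : Module.End F (TruncP F p n)) :=
  fun _ _ _ => Submodule.zero_mem _

lemma Shift.one : Shift F p n i 0 (1 : Module.End F (TruncP F p n)) :=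
  fun m u hu => by simpa using hu

lemma Shift.sum {ι : Type*} (s : Finset ι) (f : ι → Module.End F (TruncP F p n))
    (h : ∀ j ∈ s, Shift F p n i v (f j)) : Shift F p n i v (∑ j ∈ s, f j) := by
  intro m u hu
  rw [LinearMap.sum_apply]
  exact Submodule.sum_mem _ fun j hj => h j hj m u hu

lemma Shift.lie (hf : Shift F p n i v f) (hg : Shift F p n i w g) :
    Shift F p n i (v + w) ⁅f, g⁆ := by
  rw [Ring.lie_def]
  exact (hf.mul hg).sub (by rw [add_comm v]; exact hg.mul hf)

lemma Shift.mulOp_xpow (a : Fin n → ℕ) : Shift F p n i (a i) (mulOp F p n (xpow F p n a)) := by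
  refine Shift.of_xpow fun b => Submodule.subset_span ⟨a + b, ?_, (xpow_add F p n a b).symm⟩
  rw [Pi.add_apply]; push_cast; ring

/-- An operator of degree a nonzero multiple of `p` vanishes, exponents being confined
to `[0, p-1]`. -/
lemma Shift.eq_zero {c : ℤ} (hc : c ≠ 0) (hf : Shift F p n i (p * c) f) : f = 0 := by
  refine end_ext F p n fun b => ?_
  rcases le_or_gt p (b i) with hb | hb
  · rw [xpow_eq_zero F p n hb, map_zero, map_zero]
  · refine Gcomp_eq_zero F p n i (m := b i + p * c) ?_
      (hf _ _ (Submodule.subset_span ⟨b, rfl, rfl⟩))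
    rcases lt_or_gt_of_ne hc with h | h
    · left; nlinarith
    · right; nlinarith

/-- The coefficients of the powers of the truncated exponential are homogeneous. -/
lemma Shift.coeff_serE_pow {D x : Module.End F (TruncP F p n)} {c : ℤ}
    (hD : Shift F p n i (-c) D) (hx : Shift F p n i v x) (m k : ℕ) :
    Shift F p n i (m * v - k * c) ((serE F p D x ^ m).coeff k) := by
  have h1 : ∀ k : ℕ, Shift F p n i (v - k * c) ((fun y => ⁅D, y⁆)^[k] x) := by
    intro k
    induction k with
    | zero => simpa using hx
    | succ k ih =>
      rw [Function.iterate_succ_apply']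
      have := hD.lie ih
      rwa [show -c + (v - k * c) = v - (k + 1 : ℕ) * c by push_cast; ring] at this
  have h2 : ∀ k : ℕ, Shift F p n i (v - k * c) ((serE F p D x).coeff k) := by
    intro k
    rw [serE_coeff]
    split_ifs
    · exact (h1 k).smul _
    · exact Shift.zero
  induction m generalizing k with
  | zero =>
    rw [pow_zero, coeff_one]
    split_ifs with h
    · subst h; simpa using Shift.one
    · exact Shift.zero
  | succ m ih =>
    rw [pow_succ, coeff_mul]
    refine Shift.sum _ _ fun jk hjk => ?_
    rw [HasAntidiagonal.mem_antidiagonal] at hjk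
    have := (ih jk.1).mul (h2 jk.2)
    rwa [show (m * v - jk.1 * c + (v - jk.2 * c) : ℤ) = (m + 1 : ℕ) * v - k * c by
      rw [← hjk]; push_cast; ring] at this

variable [CharP F p]

lemma Shift.dOp (j : Fin n) : Shift F p n i (-(Pi.single j 1 : Fin n → ℤ) i) (dOp F p n j) := by
  refine Shift.of_xpow fun b => ?_
  change Dj F p n j _ ∈ _
  rw [Dj_xpow]
  rcases Nat.eq_zero_or_pos (b j) with h | h
  · simp [h]
  · refine Submodule.smul_mem _ _ (Submodule.subset_span ⟨_, ?_, rfl⟩)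
    rcases eq_or_ne i j with rfl | hi
    · simp; omega
    · simp [hi]

/-- `D_{rs}(x^a)` is homogeneous of multidegree `a - ε_r - ε_s`. -/
lemma Shift.Dij_xpow (r s : Fin n) (a : Fin n → ℕ) :
    Shift F p n i (a i - (Pi.single r 1 : Fin n → ℤ) i - (Pi.single s 1 : Fin n → ℤ) i)
      (toEndW F p n (Dij F p n r s (xpow F p n a))) := by
  have h : ∀ j : Fin n, Shift F p n i (a i - (Pi.single j 1 : Fin n → ℤ) i)
      (mulOp F p n (Dj F p n j (xpow F p n a))) := by
    intro j
    have h1 := dOp_mul_mulOp F p n j (xpow F p n a)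
    rw [eq_comm, ← eq_sub_iff_add_eq'] at h1
    rw [h1]
    have h2 := (Shift.dOp (F := F) (p := p) (i := i) j).lie (Shift.mulOp_xpow (F := F) (p := p) a)
    rwa [neg_add_eq_sub, Ring.lie_def] at h2
  rw [toEndW_Dij]
  have h3 := (h s).mul (Shift.dOp (F := F) (p := p) (i := i) r)
  have h4 := (h r).mul (Shift.dOp (F := F) (p := p) (i := i) s)
  refine Shift.sub ?_ ?_
  · convert h3 using 1; ring
  · convert h4 using 1; ring

end Shift

/-! ### The degree-`p` coefficients attached to the generators of `S(n)` -/

section Assembly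

open Finset Polynomial

variable [CharP F p]

omit [CharP F p] in
lemma toEndW_injective : Function.Injective (toEndW F p n) := by
  intro x y h
  ext u
  exact LinearMap.congr_fun h u

omit [CharP F p] in
lemma toEndW_lie (x y : Witt F p n) :
    toEndW F p n ⁅x, y⁆ = ⁅toEndW F p n x, toEndW F p n y⁆ := rfl

omit [CharP F p] in
lemma toEndW_iter (x y : Witt F p n) (k : ℕ) :
    toEndW F p n ((fun z => ⁅x, z⁆)^[k] y)
      = (fun z => ⁅toEndW F p n x, z⁆)^[k] (toEndW F p n y) := by
  induction k with
  | zero => rfl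
  | succ k ih => rw [Function.iterate_succ_apply', Function.iterate_succ_apply', ← ih]; rfl

omit [CharP F p] in
lemma toEndW_SqE (D x y : Witt F p n) :
    toEndW F p n (SqE F p (fun x y => ⁅x, y⁆) D x y)
      = SqE F p (fun x y => ⁅x, y⁆) (toEndW F p n D) (toEndW F p n x) (toEndW F p n y) := by
  simp only [SqE, Squaring, map_sum, map_smul, toEndW_lie, toEndW_iter]

omit [CharP F p] in
lemma toEndW_HOp (D x xp y : Witt F p n) :
    toEndW F p n (HOp p (fun x y => ⁅x, y⁆) (SqE F p (fun x y => ⁅x, y⁆) D) x xp y)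
      = HOp p (fun x y => ⁅x, y⁆) (SqE F p (fun x y => ⁅x, y⁆) (toEndW F p n D))
        (toEndW F p n x) (toEndW F p n xp) (toEndW F p n y) := by
  simp only [HOp, map_sub, map_sum, toEndW_iter, toEndW_SqE]

/-- The toral element `x_r D_r - x_s D_s` lies in `S(n)`: it is the bracket of the
divergence-free fields `x_r D_s` and `x_s D_r`. -/
lemma torus_mem_Ssub {r s : Fin n} (hrs : r ≠ s) :
    xv F p n r • Dj F p n r - xv F p n s • Dj F p n s ∈ Ssub F p n := by
  have hdiv : ∀ {a b : Fin n}, a ≠ b → divW F p n (xv F p n a • Dj F p n b) = 0 := by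
    intro a b hab
    refine sum_eq_zero fun i _ => ?_
    change Dj F p n i (xv F p n a * Dj F p n b (xv F p n i)) = 0
    rw [Dj_xv]
    split_ifs with h
    · subst h
      rw [mul_one, Dj_xv, if_neg hab.symm]
    · rw [mul_zero, map_zero]
  refine Submodule.subset_span ⟨_, _, hdiv hrs, hdiv hrs.symm, toEndW_injective F p n ?_⟩
  rw [toEndW_lie]
  change mulOp F p n (xv F p n r) * dOp F p n r - mulOp F p n (xv F p n s) * dOp F p n s
    = ⁅mulOp F p n (xv F p n r) * dOp F p n s, mulOp F p n (xv F p n s) * dOp F p n r⁆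
  rw [Ring.lie_def, mul_assoc, ← mul_assoc (dOp F p n s), dOp_mul_xv, mul_assoc,
    ← mul_assoc (dOp F p n r), dOp_mul_xv, add_mul, add_mul, mul_add, mul_add, one_mul, one_mul,
    mul_assoc _ (dOp F p n s), mul_assoc _ (dOp F p n r) (dOp F p n s), (dOp_comm F p n s r).eq,
    ← mul_assoc, ← mul_assoc (mulOp F p n (xv F p n s)), (mulOp_comm F p n (xv F p n r) _).eq]
  abel

/-- For `h` different from `r` and `s` and `x^a = x_r x_s x_h`, the degree-`p` coefficient is
`T = x_r D_r - x_s D_s`; it arises as `T^p`, and `T^p = T` since the eigenvalues of `T` lie in the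
prime field. -/
lemma coeff_serE_pow_torus (hp : p.Prime) (hp5 : 5 ≤ p) {r s h : Fin n} (hr : h ≠ r)
    (hs : h ≠ s) :
    (serE F p (dOp F p n h) (mulOp F p n (xv F p n h) *
      (mulOp F p n (xv F p n r) * dOp F p n r - mulOp F p n (xv F p n s) * dOp F p n s)) ^ p).coeff p
      = mulOp F p n (xv F p n r) * dOp F p n r - mulOp F p n (xv F p n s) * dOp F p n s := by
  rw [coeff_serE_pow_of_commute F hp hp5 (dOp_mul_xv F p n h)]
  · refine end_ext F p n fun b => ?_
    have hT : ((mulOp F p n (xv F p n r) * dOp F p n r - mulOp F p n (xv F p n s) * dOp F p n s :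
        Module.End F (TruncP F p n))) (xpow F p n b) = ((b r : F) - b s) • xpow F p n b := by
      rw [LinearMap.sub_apply, euler_apply, euler_apply, sub_smul]
    have hTk : ∀ k : ℕ, ((mulOp F p n (xv F p n r) * dOp F p n r
        - mulOp F p n (xv F p n s) * dOp F p n s : Module.End F (TruncP F p n)) ^ k)
          (xpow F p n b) = ((b r : F) - b s) ^ k • xpow F p n b := by
      intro k
      induction k with
      | zero => simp
      | succ k ih => rw [pow_succ, Module.End.mul_apply, hT, map_smul, ih, smul_smul, pow_succ']
    rw [hTk, hT]
    have : Fact p.Prime := ⟨hp⟩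
    have hfr : ((b r : F) - b s) ^ p = (b r : F) - b s := by
      rw [← frobenius_def, map_sub, map_natCast, map_natCast]
    rw [hfr]
  · exact ((dOp_comm_xv F p n hr).mul_right (dOp_comm F p n h r)).sub_right
      ((dOp_comm_xv F p n hs).mul_right (dOp_comm F p n h s))
  · exact ((mulOp_comm F p n _ _).mul_right (dOp_comm_xv F p n hr.symm).symm).sub_right
      ((mulOp_comm F p n _ _).mul_right (dOp_comm_xv F p n hs.symm).symm)

/-- For `h = r` and `x^a = x_r² x_s`, the degree-`p` coefficient vanishes. -/
lemma coeff_serE_pow_nil (hp : p.Prime) (hp5 : 5 ≤ p) {r s : Fin n} (hrs : r ≠ s) :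
    (serE F p (dOp F p n r) (mulOp F p n (xv F p n r) *
      (mulOp F p n (xv F p n r) * dOp F p n r
        - 2 * (mulOp F p n (xv F p n s) * dOp F p n s))) ^ p).coeff p = 0 := by
  have hpow : mulOp F p n (xv F p n r) ^ p = 0 := by
    rw [LinearMap.pow_mulLeft, xv_pow, xpow_eq_zero F p n (i := r) (by simp)]
    exact LinearMap.mulLeft_zero_eq_zero F _
  rw [coeff_serE_pow_of_weyl F hp hp5 (dOp_mul_xv F p n r)
    ((dOp_comm_xv F p n hrs).mul_right (dOp_comm F p n r s))
    ((mulOp_comm F p n _ _).mul_right (dOp_comm_xv F p n hrs.symm).symm) hpow]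
  refine end_ext F p n fun b => ?_
  have hG : (mulOp F p n (xv F p n r) * dOp F p n r
        - 2 * (mulOp F p n (xv F p n s) * dOp F p n s) : Module.End F (TruncP F p n))
        (xpow F p n b) = ((b r : F) - 2 * b s) • xpow F p n b := by
    rw [two_mul, LinearMap.sub_apply, LinearMap.add_apply, euler_apply, euler_apply, ← add_smul,
      ← sub_smul, two_mul]
  have hk : ∀ k : ℕ, risingF (mulOp F p n (xv F p n r) * dOp F p n r
        - 2 * (mulOp F p n (xv F p n s) * dOp F p n s) : Module.End F (TruncP F p n)) k
        (xpow F p n b) = (∏ j ∈ range k, ((b r : F) - 2 * b s + j)) • xpow F p n b := by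
    intro k
    induction k with
    | zero => simp [risingF]
    | succ k ih =>
      rw [risingF, Module.End.mul_apply, ih, map_smul, LinearMap.add_apply, hG,
        Module.End.natCast_apply, ← Nat.cast_smul_eq_nsmul F, ← add_smul, smul_smul,
        prod_range_succ]
  -- one of the `p` consecutive integers `b_r - 2 b_s + j` is divisible by `p`
  have hz : ∏ j ∈ range p, ((b r : F) - 2 * b s + j) = 0 := by
    have hp0 : (0 : ℤ) < p := by exact_mod_cast hp.pos
    have h0 := Int.emod_nonneg (2 * (b s : ℤ) - b r) hp0.ne'
    refine prod_eq_zero (i := ((2 * (b s : ℤ) - b r) % p).toNat) ?_ ?_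
    · rw [mem_range]
      have := Int.emod_lt_of_pos (2 * (b s : ℤ) - b r) hp0
      omega
    · have h1 : ((((2 * (b s : ℤ) - b r) % p).toNat : ℤ) : F) = 2 * b s - b r := by
        rw [Int.toNat_of_nonneg h0, Int.emod_def]
        push_cast
        rw [CharP.cast_eq_zero F p, zero_mul, sub_zero]
      rw [Int.cast_natCast] at h1
      rw [h1]
      ring
  rw [hk, hz, zero_smul, LinearMap.zero_apply]

/-- `D_{rs}(x_r x_s x_h) = x_h (x_r D_r - x_s D_s)` for `h` different from `r` and `s`. -/
lemma toEndW_Dij_of_ne {r s h : Fin n} (hrs : r ≠ s) (hr : h ≠ r) (hs : h ≠ s) :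
    toEndW F p n (Dij F p n r s (xv F p n r * xv F p n s * xv F p n h)) =
      mulOp F p n (xv F p n h) * (mulOp F p n (xv F p n r) * dOp F p n r
        - mulOp F p n (xv F p n s) * dOp F p n s) := by
  have e1 : Dj F p n s (xv F p n r * xv F p n s * xv F p n h) = xv F p n h * xv F p n r := by
    simp only [Derivation.leibniz, Dj_xv, smul_eq_mul, if_neg hs.symm, if_neg hrs.symm, if_true]
    ring
  have e2 : Dj F p n r (xv F p n r * xv F p n s * xv F p n h) = xv F p n h * xv F p n s := by
    simp only [Derivation.leibniz, Dj_xv, smul_eq_mul, if_neg hr.symm, if_neg hrs, if_true]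
    ring
  rw [toEndW_Dij, e1, e2, mulOp_mul, mulOp_mul, mul_sub, mul_assoc, mul_assoc]

/-- `D_{rs}(x_r² x_s) = x_r (x_r D_r - 2 x_s D_s)`. -/
lemma toEndW_Dij_sq {r s : Fin n} (hrs : r ≠ s) :
    toEndW F p n (Dij F p n r s (xv F p n r * xv F p n s * xv F p n r)) =
      mulOp F p n (xv F p n r) * (mulOp F p n (xv F p n r) * dOp F p n r
        - 2 * (mulOp F p n (xv F p n s) * dOp F p n s)) := by
  have e1 : Dj F p n s (xv F p n r * xv F p n s * xv F p n r) = xv F p n r * xv F p n r := by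
    simp only [Derivation.leibniz, Dj_xv, smul_eq_mul, if_neg hrs.symm, if_true]
    ring
  have e2 : Dj F p n r (xv F p n r * xv F p n s * xv F p n r)
      = xv F p n r * xv F p n s + xv F p n r * xv F p n s := by
    simp only [Derivation.leibniz, Dj_xv, smul_eq_mul, if_neg hrs, if_true]
    ring
  have e3 : ∀ f g, mulOp F p n (f + g) = mulOp F p n f + mulOp F p n g :=
    fun f g => LinearMap.ext fun u => add_mul f g u
  rw [toEndW_Dij, e1, e2, e3, mulOp_mul, mulOp_mul]
  simp only [two_mul, mul_sub, add_mul, mul_add, mul_assoc]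

/-- The degree-`p` coefficient attached to `D_{rs}(x^a)` is an element of `S(n)`. -/
lemma exists_coeff_mem_Ssub (hp : p.Prime) (hp5 : 5 ≤ p) (h : Fin n) {r s : Fin n} (hrs : r ≠ s)
    (a : Fin n → ℕ) : ∃ z ∈ Ssub F p n, toEndW F p n z =
      (serE F p (dOp F p n h) (toEndW F p n (Dij F p n r s (xpow F p n a))) ^ p).coeff p := by
  by_cases ha : a = Pi.single r 1 + Pi.single s 1 + Pi.single h 1
  · have hx : xpow F p n a = xv F p n r * xv F p n s * xv F p n h := by
      rw [ha, xpow_add, xpow_add]; rfl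
    rw [hx]
    rcases eq_or_ne h r with rfl | hr
    · exact ⟨0, Submodule.zero_mem _, by
        rw [toEndW_Dij_sq F p n hrs, coeff_serE_pow_nil F p n hp hp5 hrs, map_zero]⟩
    rcases eq_or_ne h s with rfl | hs
    · refine ⟨0, Submodule.zero_mem _, ?_⟩
      have hanti : toEndW F p n (Dij F p n r h (xv F p n r * xv F p n h * xv F p n h))
          = 0 - toEndW F p n (Dij F p n h r (xv F p n h * xv F p n r * xv F p n h)) := by
        rw [mul_comm (xv F p n r), toEndW_Dij, toEndW_Dij, zero_sub, neg_sub]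
      have hzero : serE F p (dOp F p n h) (0 : Module.End F (TruncP F p n)) = 0 := by
        have := serE_sub F (p := p) (dOp F p n h) 0 0
        rwa [sub_self, sub_self] at this
      rw [hanti, serE_sub, hzero, zero_sub, neg_pow, toEndW_Dij_sq F p n hr,
        ← C_1, ← C_neg, ← C_pow, coeff_C_mul, coeff_serE_pow_nil F p n hp hp5 hr, mul_zero,
        map_zero]
    · exact ⟨_, torus_mem_Ssub F p n hrs, by
        rw [toEndW_Dij_of_ne F p n hrs hr hs, coeff_serE_pow_torus F p n hp hp5 hr hs]; rfl⟩
  · refine ⟨0, Submodule.zero_mem _, ?_⟩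
    obtain ⟨i, hi⟩ := Function.ne_iff.mp ha
    have h1 := Shift.coeff_serE_pow (Shift.dOp (F := F) (p := p) (i := i) h)
      (Shift.Dij_xpow r s a) p p
    rw [← mul_sub] at h1
    rw [map_zero, Shift.eq_zero ?_ h1]
    intro hc
    apply hi
    have hcast : ∀ j : Fin n, (((Pi.single j 1 : Fin n → ℕ) i : ℕ) : ℤ)
        = (Pi.single j 1 : Fin n → ℤ) i := by
      intro j; simp only [Pi.single_apply]; split_ifs <;> rfl
    zify
    simp only [Pi.add_apply, Nat.cast_add, hcast]
    linarith

end Assembly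


/-- For every `h`, `r < s` and every multi-index `a`, the map
`H_{Sq(D_h)}(D_{rs}(x^a))` is an inner derivation of the special algebra `S(n)`,
the `p`-th power of `D_{rs}(x^a)` being its `p`-fold composition as a derivation
of `A(n)`. -/
theorem special_sq_HOp_inner
    (p n : ℕ) (hp : p.Prime) (hp5 : 5 ≤ p) (hn : 3 ≤ n)
    (F : Type*) [Field F] [IsAlgClosed F] [CharP F p] :
    ∀ (h : Fin n) (r s : Fin n), r < s → ∀ a : Fin n → ℕ, ∀ Dp : Witt F p n,
      (∀ f, Dp f = (⇑(Dij F p n r s (xpow F p n a)))^[p] f) →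
      IsInnerOn F (Ssub F p n) (fun x y => ⁅x, y⁆)
        (HOp p (fun x y => ⁅x, y⁆) (SqE F p (fun x y => ⁅x, y⁆) (Dj F p n h))
          (Dij F p n r s (xpow F p n a)) Dp) := by
  intro h r s hrs a Dp hDp
  obtain ⟨z, hz, hzw⟩ := exists_coeff_mem_Ssub F p n hp hp5 h hrs.ne a
  refine ⟨z, hz, fun y _ => toEndW_injective F p n ?_⟩
  have hpow : toEndW F p n Dp = toEndW F p n (Dij F p n r s (xpow F p n a)) ^ p := by
    refine LinearMap.ext fun f => ?_
    rw [Module.End.pow_apply]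
    exact hDp f
  rw [toEndW_HOp, hpow, HOp_assoc F hp, toEndW_lie, hzw]
end
end
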